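/- Suppose the stochastic kernel P(dx′|x,a) on X given X×A is weakly continuous and the stochastic kernel Q(dy|a,x) on Y given A×X is continuous in total variation. Then: (1) the stochastic kernel R′(dy|z,a) on Y given P(X)×A is setwise continuous; (2) every stochastic kernel H on X given P(X)×A×Y satisfying the disintegration identity (3.4) satisfies Assumption (H); and (3) for any such H, the stochastic kernel q on P(X) given P(X)×A, defined by q(D|z,a) = ∫_Y 1{H(z,a,y) ∈ D} R′(dy|z,a), is weakly continuous. -/

import Mathlib

open MeasureTheory Filter Topology
open scoped ENNReal NNReal

/-- The joint kernel `R(B×C|z,a) = ∫_X ∫_B Q(C|a,x') P(dx'|x,a) z(dx)` of formula (3.3). -/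
noncomputable def Rfun {X Y A : Type*} [MeasurableSpace X] [MeasurableSpace Y]
    (P : X × A → ProbabilityMeasure X) (Q : A × X → ProbabilityMeasure Y)
    (z : ProbabilityMeasure X) (a : A) (B : Set X) (C : Set Y) : ℝ≥0∞ :=
  ∫⁻ x, (∫⁻ x' in B, ((Q (a, x') : Measure Y) C) ∂((P (x, a) : Measure X))) ∂(z : Measure X)

/-- The marginal observation kernel `R'(dy|z,a)` on `Y` given `P(X)×A`, as a measure. -/
noncomputable def RprimeM {X Y A : Type*} [MeasurableSpace X] [MeasurableSpace Y]
    (P : X × A → ProbabilityMeasure X) (Q : A × X → ProbabilityMeasure Y)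
    (z : ProbabilityMeasure X) (a : A) : Measure Y :=
  ((z : Measure X).bind fun x => (P (x, a) : Measure X)).bind fun x' => (Q (a, x') : Measure Y)

/-- The disintegration identity (3.4). -/
def Disint {X Y A : Type*} [MeasurableSpace X] [MeasurableSpace Y]
    (P : X × A → ProbabilityMeasure X) (Q : A × X → ProbabilityMeasure Y)
    (H : ProbabilityMeasure X × A × Y → ProbabilityMeasure X) : Prop :=
  ∀ (z : ProbabilityMeasure X) (a : A) (B : Set X) (C : Set Y),
    MeasurableSet B → MeasurableSet C →
      Rfun P Q z a B C = ∫⁻ y in C, ((H (z, a, y) : Measure X) B) ∂(RprimeM P Q z a)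

/-- Assumption (H). -/
def AssumptionH {X Y A : Type*}
    [MeasurableSpace X] [TopologicalSpace X] [MeasurableSpace Y] [TopologicalSpace A]
    [OpensMeasurableSpace X]
    (P : X × A → ProbabilityMeasure X) (Q : A × X → ProbabilityMeasure Y)
    (H : ProbabilityMeasure X × A × Y → ProbabilityMeasure X) : Prop :=
  ∀ (zs : ℕ → ProbabilityMeasure X) (z : ProbabilityMeasure X) (as : ℕ → A) (a : A),
    Tendsto zs atTop (𝓝 z) → Tendsto as atTop (𝓝 a) →
    ∃ φ : ℕ → ℕ, StrictMono φ ∧ ∃ C : Set Y, MeasurableSet C ∧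
      RprimeM P Q z a C = 1 ∧
      ∀ y ∈ C, Tendsto (fun k => H (zs (φ k), as (φ k), y)) atTop (𝓝 (H (z, a, y)))

/-- The Borel σ-algebra of the weak topology on `P(X)`. -/
noncomputable instance probabilityMeasureMeasurableSpace {X : Type*}
    [MeasurableSpace X] [TopologicalSpace X] [OpensMeasurableSpace X] :
    MeasurableSpace (ProbabilityMeasure X) := borel _

/-- The transition kernel `q(D|z,a) = ∫_Y 1{H(z,a,y) ∈ D} R'(dy|z,a)` of the COMDP. -/
noncomputable def qker {X Y A : Type*}
    [MeasurableSpace X] [TopologicalSpace X] [OpensMeasurableSpace X] [MeasurableSpace Y]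
    (P : X × A → ProbabilityMeasure X) (Q : A × X → ProbabilityMeasure Y)
    (H : ProbabilityMeasure X × A × Y → ProbabilityMeasure X)
    (z : ProbabilityMeasure X) (a : A) : Measure (ProbabilityMeasure X) :=
  (RprimeM P Q z a).map fun y => H (z, a, y)

/-!
Integrals of an equicontinuous, uniformly bounded family of functions converge uniformly along a
weakly convergent sequence of probability measures. Continuity of `Q` in total variation makes the
functions `(a, x) ↦ f x * ∫ h(y) Q(dy|a,x)`, with `f` bounded continuous and `h` ranging over all
measurable functions into `[-1, 1]`, such a family. Hence the joint laws `R(·|z,a)` converge weakly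
in the state and uniformly over `h` in the observation. Taking `f = 1` gives convergence of
`R'(·|z,a)` in total variation.

Writing `R` as the mixture of the posteriors `H(z,a,y)` and taking for `h` the sign of the
difference of two posterior means, one sees that `y ↦ ∫ f dH(z,a,y)` depends continuously in
`L¹(R'(·|z,a))` on `(z,a)`. Countably many `f` determine weak convergence, so a diagonal argument
extracts a subsequence along which the posteriors converge weakly for almost every observation.
Weak continuity of `q` follows by dominated convergence and the subsequence principle.
-/

section LayerCake

variable {α β : Type*} [MeasurableSpace α] [MeasurableSpace β]

lemma integrableOn_Ioc_measureReal_superlevel (μ : Measure α) [IsFiniteMeasure μ] (f : α → ℝ)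
    (a b : ℝ) : IntegrableOn (fun t => μ.real {x | t ≤ f x}) (Set.Ioc a b) := by
  have antitone_superlevel : Antitone fun t => μ.real {x | t ≤ f x} :=
    fun s t hst => measureReal_mono fun x hx => hst.trans hx
  exact (antitone_superlevel.locallyIntegrable.integrableOn_isCompact isCompact_Icc).mono_set
    Set.Ioc_subset_Icc_self

lemma integral_le_integral_add_of_measureReal_superlevel_le
    {μ : Measure α} [IsFiniteMeasure μ] {ν : Measure β} [IsFiniteMeasure ν]
    {f : α → ℝ} {g : β → ℝ} {M δ : ℝ} (hf : Measurable f) (hg : Measurable g) (hM : 0 ≤ M)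
    (hf0 : ∀ x, 0 ≤ f x) (hfM : ∀ x, f x ≤ M) (hg0 : ∀ y, 0 ≤ g y) (hgM : ∀ y, g y ≤ M)
    (h : ∀ t, μ.real {x | t ≤ f x} ≤ ν.real {y | t ≤ g y} + δ) :
    ∫ x, f x ∂μ ≤ ∫ y, g y ∂ν + M * δ := by
  have hf_int : Integrable f μ := .of_bound hf.aestronglyMeasurable M
    (.of_forall fun x => by simpa only [Real.norm_of_nonneg (hf0 x)] using hfM x)
  have hg_int : Integrable g ν := .of_bound hg.aestronglyMeasurable M
    (.of_forall fun y => by simpa only [Real.norm_of_nonneg (hg0 y)] using hgM y)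
  rw [hf_int.integral_eq_integral_Ioc_meas_le (.of_forall hf0) (.of_forall hfM),
    hg_int.integral_eq_integral_Ioc_meas_le (.of_forall hg0) (.of_forall hgM)]
  have hν := integrableOn_Ioc_measureReal_superlevel ν g 0 M
  have hδ : IntegrableOn (fun _ => δ) (Set.Ioc 0 M) := integrableOn_const (by simp)
  calc ∫ t in Set.Ioc 0 M, μ.real {x | t ≤ f x}
      ≤ ∫ t in Set.Ioc 0 M, (ν.real {y | t ≤ g y} + δ) :=
        setIntegral_mono (integrableOn_Ioc_measureReal_superlevel μ f 0 M) (hν.add hδ) h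
    _ = (∫ t in Set.Ioc 0 M, ν.real {y | t ≤ g y}) + M * δ := by
        rw [integral_add hν hδ, setIntegral_const, Real.volume_real_Ioc_of_le hM, sub_zero,
          smul_eq_mul]

end LayerCake

section EquicontinuousFamilies

lemma measureReal_superlevel_le_of_levyProkhorovEDist_lt {T : Type*} [PseudoMetricSpace T]
    [MeasurableSpace T] {μ ν : Measure T} [IsFiniteMeasure ν] {ε : ℝ} (hε : 0 < ε)
    (hμν : levyProkhorovEDist μ ν < ENNReal.ofReal ε) {f : T → ℝ} (hf_meas : Measurable f)
    (hf : LipschitzWith 1 f) (t : ℝ) :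
    μ.real {x | t ≤ f x} ≤ ν.real {x | t ≤ f x + ε} + ε := by
  have thickening_subset : Metric.thickening ε {x | t ≤ f x} ⊆ {x | t ≤ f x + ε} := by
    intro x hx
    obtain ⟨y, hy : t ≤ f y, hxy⟩ := Metric.mem_thickening_iff.1 hx
    have hdist := hf.dist_le_mul y x
    rw [NNReal.coe_one, one_mul, dist_comm y x, Real.dist_eq] at hdist
    change t ≤ f x + ε
    linarith [le_abs_self (f y - f x)]
  have hle : μ {x | t ≤ f x} ≤ ν {x | t ≤ f x + ε} + ENNReal.ofReal ε := by
    have := left_measure_le_of_levyProkhorovEDist_lt hμν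
      (measurableSet_le (measurable_const (a := t)) hf_meas)
    rw [ENNReal.toReal_ofReal hε.le] at this
    exact this.trans (by gcongr)
  calc μ.real {x | t ≤ f x} ≤ (ν {x | t ≤ f x + ε} + ENNReal.ofReal ε).toReal :=
        ENNReal.toReal_mono (by finiteness) hle
    _ = ν.real {x | t ≤ f x + ε} + ε := by
        rw [ENNReal.toReal_add (by finiteness) (by finiteness), ENNReal.toReal_ofReal hε.le,
          measureReal_def]

lemma integral_le_integral_add_of_levyProkhorovEDist_lt {T : Type*} [PseudoMetricSpace T]
    [MeasurableSpace T] {μ ν : Measure T} [IsProbabilityMeasure μ]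
    [IsProbabilityMeasure ν] {ε : ℝ} (hε : 0 < ε) (hμν : levyProkhorovEDist μ ν < ENNReal.ofReal ε)
    {f : T → ℝ} {K : ℝ} (hf_meas : Measurable f) (hf : LipschitzWith 1 f) (hK : ∀ x, |f x| ≤ K) :
    ∫ x, f x ∂μ ≤ ∫ x, f x ∂ν + (ε + (2 * K + ε) * ε) := by
  obtain ⟨x₀⟩ := nonempty_of_isProbabilityMeasure μ
  have hK0 : 0 ≤ K := (abs_nonneg _).trans (hK x₀)
  have hf_int (ρ : Measure T) [IsProbabilityMeasure ρ] : Integrable f ρ :=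
    .of_bound hf_meas.aestronglyMeasurable K (.of_forall hK)
  have shifted := integral_le_integral_add_of_measureReal_superlevel_le (μ := μ) (ν := ν)
    (f := fun x => f x + K) (g := fun x => f x + K + ε) (M := 2 * K + ε) (δ := ε)
    (hf_meas.add_const K) ((hf_meas.add_const K).add_const ε) (by linarith)
    (fun x => by linarith [(abs_le.1 (hK x)).1]) (fun x => by linarith [(abs_le.1 (hK x)).2])
    (fun x => by linarith [(abs_le.1 (hK x)).1]) (fun x => by linarith [(abs_le.1 (hK x)).2])
    (measureReal_superlevel_le_of_levyProkhorovEDist_lt hε hμν (hf_meas.add_const K)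
      (by simpa using! hf.add (LipschitzWith.const K)))
  simp only [add_assoc] at shifted
  rw [integral_add (hf_int μ) (integrable_const K),
    integral_add (hf_int ν) (integrable_const (K + ε))] at shifted
  simp only [integral_const, probReal_univ, one_smul] at shifted
  linarith

lemma tendstoUniformly_integral_of_lipschitz {T : Type*} [PseudoMetricSpace T]
    [TopologicalSpace.SeparableSpace T] [MeasurableSpace T] [OpensMeasurableSpace T]
    {ι κ : Type*} {l : Filter ι} {μs : ι → ProbabilityMeasure T} {μ : ProbabilityMeasure T}
    (hμ : Tendsto μs l (𝓝 μ)) {F : κ → T → ℝ} {K : ℝ} (hF : ∀ k, LipschitzWith 1 (F k))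
    (hK : ∀ k x, |F k x| ≤ K) :
    TendstoUniformly (fun i k => ∫ x, F k x ∂(μs i : Measure T))
      (fun k => ∫ x, F k x ∂(μ : Measure T)) l := by
  have hLP : Tendsto (fun i => levyProkhorovDist (μ : Measure T) (μs i)) l (𝓝 0) := by
    have := (LevyProkhorov.continuous_ofMeasure_probabilityMeasure.tendsto μ).comp hμ
    simpa [tendsto_iff_dist_tendsto_zero, LevyProkhorov.dist_probabilityMeasure_def,
      levyProkhorovDist_comm] using! this
  rw [Metric.tendstoUniformly_iff]
  intro η hη
  obtain ⟨ε, hε, hεη⟩ : ∃ ε > 0, ε + (2 * K + ε) * ε < η := by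
    have hcont : Tendsto (fun ε : ℝ => ε + (2 * K + ε) * ε) (𝓝[>] 0) (𝓝 0) := by
      have : Continuous fun ε : ℝ => ε + (2 * K + ε) * ε := by fun_prop
      simpa using (this.tendsto 0).mono_left nhdsWithin_le_nhds
    obtain ⟨ε, hεη, hε⟩ := ((hcont.eventually_lt_const hη).and self_mem_nhdsWithin).exists
    exact ⟨ε, hε, hεη⟩
  filter_upwards [hLP.eventually_lt_const hε] with i hi k
  have hlt : levyProkhorovEDist (μ : Measure T) (μs i) < ENNReal.ofReal ε :=
    (ENNReal.lt_ofReal_iff_toReal_lt (levyProkhorovEDist_ne_top _ _)).2 hi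
  have hle := integral_le_integral_add_of_levyProkhorovEDist_lt hε hlt
    (hF k).continuous.measurable (hF k) (hK k)
  rw [levyProkhorovEDist_comm] at hlt
  have hge := integral_le_integral_add_of_levyProkhorovEDist_lt hε hlt
    (hF k).continuous.measurable (hF k) (hK k)
  rw [Real.dist_eq, abs_lt]
  constructor <;> linarith

/-- Mapping the space into `κ →ᵇ ℝ` by `s ↦ (F k s)ₖ` turns an equicontinuous family into one of
`1`-Lipschitz evaluations. -/
lemma tendstoUniformly_integral_of_equicontinuous {S : Type*} [TopologicalSpace S]
    [TopologicalSpace.SeparableSpace S] [MeasurableSpace S] [OpensMeasurableSpace S]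
    {ι κ : Type*} {l : Filter ι} {μs : ι → ProbabilityMeasure S} {μ : ProbabilityMeasure S}
    (hμ : Tendsto μs l (𝓝 μ)) {F : κ → S → ℝ} {K : ℝ} (hF : Equicontinuous F)
    (hK : ∀ k s, |F k s| ≤ K) :
    TendstoUniformly (fun i k => ∫ s, F k s ∂(μs i : Measure S))
      (fun k => ∫ s, F k s ∂(μ : Measure S)) l := by
  let _ : TopologicalSpace κ := ⊥
  have : DiscreteTopology κ := ⟨rfl⟩
  let Φ : S → BoundedContinuousFunction κ ℝ := fun s =>
    .ofNormedAddCommGroupDiscrete (fun k => F k s) K (hK · s)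
  have hΦ : Continuous Φ := continuous_iff_continuousAt.2 fun s =>
    BoundedContinuousFunction.tendsto_iff_tendstoUniformly.2
      (Metric.tendstoUniformly_iff.2 fun ε hε => Metric.equicontinuousAt_iff_right.1 (hF s) ε hε)
  let Ψ : S → Set.range Φ := Set.rangeFactorization Φ
  have hΨ : Continuous Ψ := hΦ.subtype_mk _
  have : TopologicalSpace.SeparableSpace (Set.range Φ) :=
    Set.rangeFactorization_surjective.denseRange.separableSpace hΨ
  borelize ↥(Set.range Φ)
  have hmap := tendstoUniformly_integral_of_lipschitz
    (ProbabilityMeasure.tendsto_map_of_tendsto_of_continuous μs μ hμ hΨ)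
    (F := fun k φ => φ.1 k) (K := K)
    (fun k => .mk_one fun φ ψ => BoundedContinuousFunction.dist_coe_le_dist k)
    (by rintro k ⟨_, s, rfl⟩; exact hK k s)
  have hint (ρ : ProbabilityMeasure S) (k : κ) :
      ∫ φ, φ.1 k ∂(ρ.map hΨ.measurable.aemeasurable : Measure (Set.range Φ)) =
        ∫ s, F k s ∂(ρ : Measure S) := by
    rw [ProbabilityMeasure.toMeasure_map, integral_map hΨ.measurable.aemeasurable]
    · rfl
    · fun_prop
  simpa only [hint] using hmap

end EquicontinuousFamilies

open ProbabilityTheory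

section TotalVariation

/-- The measurable functions `Y → [-1, 1]`, the test functions for the total variation distance. -/
structure TVTestFunction (Y : Type*) [MeasurableSpace Y] where
  toFun : Y → ℝ
  measurable : Measurable toFun
  abs_le_one : ∀ y, |toFun y| ≤ 1

variable {Y : Type*} [MeasurableSpace Y] {ι : Type*} {l : Filter ι}

instance : CoeFun (TVTestFunction Y) fun _ => Y → ℝ := ⟨TVTestFunction.toFun⟩

lemma TVTestFunction.integrable (h : TVTestFunction Y) (μ : Measure Y) [IsFiniteMeasure μ] :
    Integrable h μ :=
  .of_bound h.measurable.aestronglyMeasurable 1 (.of_forall h.abs_le_one)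

lemma TVTestFunction.abs_integral_le_one (h : TVTestFunction Y) (μ : Measure Y)
    [IsProbabilityMeasure μ] : |∫ y, h y ∂μ| ≤ 1 := by
  simpa using norm_integral_le_of_norm_le_const (f := h) (μ := μ) (.of_forall h.abs_le_one)

/-- Convergence in total variation along a filter, as uniform convergence of the integrals of all
test functions. -/
def TendstoTV (μs : ι → Measure Y) (l : Filter ι) (μ : Measure Y) : Prop :=
  TendstoUniformly (fun i (h : TVTestFunction Y) => ∫ y, h y ∂μs i) (fun h => ∫ y, h y ∂μ) l

lemma integral_le_integral_add_of_forall_measureReal_le {μ ν : Measure Y}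
    [IsProbabilityMeasure μ] [IsProbabilityMeasure ν] {δ : ℝ}
    (hμν : ∀ C, MeasurableSet C → μ.real C ≤ ν.real C + δ) (h : TVTestFunction Y) :
    ∫ y, h y ∂μ ≤ ∫ y, h y ∂ν + 2 * δ := by
  have hnonneg (y : Y) : 0 ≤ h y + 1 := by linarith [(abs_le.1 (h.abs_le_one y)).1]
  have hle (y : Y) : h y + 1 ≤ 2 := by linarith [(abs_le.1 (h.abs_le_one y)).2]
  have hmeas : Measurable fun y => h y + 1 := h.measurable.add_const 1
  have shifted := integral_le_integral_add_of_measureReal_superlevel_le hmeas hmeas zero_le_two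
    hnonneg hle hnonneg hle fun t => hμν _ (measurableSet_le measurable_const hmeas)
  rw [integral_add (h.integrable μ) (integrable_const 1),
    integral_add (h.integrable ν) (integrable_const 1)] at shifted
  simp only [integral_const, probReal_univ, one_smul] at shifted
  linarith

lemma tendstoTV_of_tendsto_iSup {μs : ι → ProbabilityMeasure Y} {μ : ProbabilityMeasure Y}
    (h : Tendsto (fun i => ⨆ C : {C : Set Y // MeasurableSet C},
      |(μs i C.1 : ℝ) - (μ C.1 : ℝ)|) l (𝓝 0)) :
    TendstoTV (fun i => (μs i : Measure Y)) l μ := by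
  refine Metric.tendstoUniformly_iff.2 fun ε hε => ?_
  filter_upwards [h.eventually_lt_const (div_pos hε three_pos)] with i hi g
  have hbdd : BddAbove (Set.range fun C : {C : Set Y // MeasurableSet C} =>
      |(μs i C.1 : ℝ) - (μ C.1 : ℝ)|) :=
    ⟨1, Set.forall_mem_range.2 fun C => abs_sub_le_of_nonneg_of_le NNReal.zero_le_coe
      (ProbabilityMeasure.apply_le_one _ _) NNReal.zero_le_coe
      (ProbabilityMeasure.apply_le_one _ _)⟩
  have hdiff (C : Set Y) (hC : MeasurableSet C) :
      |(μs i : Measure Y).real C - (μ : Measure Y).real C| ≤ ε / 3 :=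
    (le_ciSup hbdd ⟨C, hC⟩).trans hi.le
  have hle := integral_le_integral_add_of_forall_measureReal_le (μ := (μs i : Measure Y))
    (ν := (μ : Measure Y)) (δ := ε / 3) (fun C hC => by linarith [(abs_le.1 (hdiff C hC)).2]) g
  have hge := integral_le_integral_add_of_forall_measureReal_le (μ := (μ : Measure Y))
    (ν := (μs i : Measure Y)) (δ := ε / 3) (fun C hC => by linarith [(abs_le.1 (hdiff C hC)).1]) g
  rw [Real.dist_eq, abs_lt]
  constructor <;> linarith

lemma tendsto_sub_of_tendstoUniformly {κ : Type*} {F : ι → κ → ℝ} {f : κ → ℝ}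
    (h : TendstoUniformly F f l) (k : ι → κ) :
    Tendsto (fun i => F i (k i) - f (k i)) l (𝓝 0) := by
  rw [Metric.tendstoUniformly_iff] at h
  refine Metric.tendsto_nhds.2 fun ε hε => (h ε hε).mono fun i hi => ?_
  simpa [Real.dist_eq, abs_sub_comm] using hi (k i)

namespace TendstoTV

variable {μs : ι → Measure Y} {μ : Measure Y}

lemma tendsto_integral_sub (h : TendstoTV μs l μ) {g : ι → Y → ℝ} {K : ℝ}
    (hg : ∀ i, Measurable (g i)) (hK : ∀ i y, |g i y| ≤ K) :
    Tendsto (fun i => ∫ y, g i y ∂μs i - ∫ y, g i y ∂μ) l (𝓝 0) := by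
  let M := max K 1
  have hM : 0 < M := by positivity
  let scaled (i : ι) : TVTestFunction Y :=
    { toFun := fun y => M⁻¹ * g i y
      measurable := (hg i).const_mul _
      abs_le_one := fun y => by
        rw [abs_mul, abs_of_pos (inv_pos.2 hM), inv_mul_le_one₀ hM]
        exact (hK i y).trans (le_max_left _ _) }
  have hscaled := (tendsto_sub_of_tendstoUniformly h scaled).const_mul M
  simpa only [scaled, integral_const_mul, ← mul_sub, mul_inv_cancel_left₀ hM.ne', mul_zero]
    using hscaled

lemma tendsto_measure [∀ i, IsFiniteMeasure (μs i)] [IsFiniteMeasure μ] (h : TendstoTV μs l μ)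
    {C : Set Y} (hC : MeasurableSet C) : Tendsto (fun i => μs i C) l (𝓝 (μ C)) := by
  let oneOn : TVTestFunction Y :=
    { toFun := C.indicator 1
      measurable := measurable_one.indicator hC
      abs_le_one := fun y => by by_cases hy : y ∈ C <;> simp [hy] }
  rw [← ENNReal.tendsto_toReal_iff (fun i => measure_ne_top _ _) (measure_ne_top _ _)]
  simpa only [oneOn, integral_indicator_one hC, measureReal_def] using h.tendsto_at oneOn

lemma tendsto_integral {μs : ℕ → Measure Y} [IsFiniteMeasure μ] (h : TendstoTV μs atTop μ)
    {g : ℕ → Y → ℝ} {g₀ : Y → ℝ} {K : ℝ} (hg : ∀ n, Measurable (g n)) (hK : ∀ n y, |g n y| ≤ K)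
    (hsub : ∀ ψ : ℕ → ℕ, Tendsto ψ atTop atTop → ∃ φ : ℕ → ℕ,
      ∀ᵐ y ∂μ, Tendsto (fun k => g (ψ (φ k)) y) atTop (𝓝 (g₀ y))) :
    Tendsto (fun n => ∫ y, g n y ∂μs n) atTop (𝓝 (∫ y, g₀ y ∂μ)) := by
  have hlimit : Tendsto (fun n => ∫ y, g n y ∂μ) atTop (𝓝 (∫ y, g₀ y ∂μ)) := by
    refine tendsto_of_subseq_tendsto fun ψ hψ => ?_
    obtain ⟨φ, hφ⟩ := hsub ψ hψ
    exact ⟨φ, tendsto_integral_of_dominated_convergence (fun _ => K)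
      (fun k => (hg _).aestronglyMeasurable) (integrable_const K)
      (fun k => .of_forall (hK _)) hφ⟩
  simpa using (h.tendsto_integral_sub hg hK).add hlimit

end TendstoTV

end TotalVariation

section SemiUniform

variable {S X Y : Type*} [MeasurableSpace S] [MeasurableSpace X] [MeasurableSpace Y]
  [TopologicalSpace S] [TopologicalSpace X] {ι : Type*} {l : Filter ι}

/-- Semi-uniform convergence of measures on `X × Y`: weak in the first coordinate, and uniform over
the test functions of total variation in the second. -/
def TendstoSemiUniformly (ρs : ι → Measure (X × Y)) (l : Filter ι) (ρ : Measure (X × Y)) : Prop :=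
  ∀ f : BoundedContinuousFunction X ℝ,
    TendstoUniformly (fun i (h : TVTestFunction Y) => ∫ p, f p.1 * h p.2 ∂ρs i)
      (fun h => ∫ p, f p.1 * h p.2 ∂ρ) l

namespace TVTestFunction

lemma measurable_mul [OpensMeasurableSpace X] (h : TVTestFunction Y)
    (f : BoundedContinuousFunction X ℝ) : Measurable fun p : X × Y => f p.1 * h p.2 :=
  (f.continuous.measurable.comp measurable_fst).mul (h.measurable.comp measurable_snd)

lemma integrable_mul [OpensMeasurableSpace X] (h : TVTestFunction Y)
    (f : BoundedContinuousFunction X ℝ) (ρ : Measure (X × Y)) [IsFiniteMeasure ρ] :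
    Integrable (fun p => f p.1 * h p.2) ρ :=
  .of_bound (h.measurable_mul f).aestronglyMeasurable ‖f‖ (.of_forall fun p => by
    simpa using mul_le_mul (f.norm_coe_le_norm p.1) (h.abs_le_one p.2) (abs_nonneg _)
      (norm_nonneg _))

end TVTestFunction

lemma equicontinuous_mul_integral {κ : Kernel S Y}
    [IsMarkovKernel κ] (hκ : ∀ s, TendstoTV κ (𝓝 s) (κ s))
    (f : BoundedContinuousFunction S ℝ) :
    Equicontinuous fun (h : TVTestFunction Y) s => f s * ∫ y, h y ∂κ s := by
  intro s
  rw [Metric.equicontinuousAt_iff_right]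
  intro ε hε
  let δ := ε / (1 + ‖f‖)
  have hδ : 0 < δ := by positivity
  filter_upwards [Metric.tendsto_nhds.1 (f.continuous.tendsto s) δ hδ,
    Metric.tendstoUniformly_iff.1 (hκ s) δ hδ] with s' hf hI h
  rw [dist_comm] at hf
  simp only [Real.dist_eq] at hf hI ⊢
  calc |f s * ∫ y, h y ∂κ s - f s' * ∫ y, h y ∂κ s'|
      = |(f s - f s') * ∫ y, h y ∂κ s + f s' * (∫ y, h y ∂κ s - ∫ y, h y ∂κ s')| := by ring_nf
    _ ≤ |f s - f s'| * |∫ y, h y ∂κ s| + |f s'| * |∫ y, h y ∂κ s - ∫ y, h y ∂κ s'| := by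
        rw [← abs_mul, ← abs_mul]
        exact abs_add_le _ _
    _ ≤ |f s - f s'| * 1 + ‖f‖ * |∫ y, h y ∂κ s - ∫ y, h y ∂κ s'| := by
        gcongr
        · exact h.abs_integral_le_one _
        · exact f.norm_coe_le_norm s'
    _ < δ * 1 + ‖f‖ * δ :=
        add_lt_add_of_lt_of_le (by gcongr) (by gcongr; exact (hI h).le)
    _ = ε := by simp only [δ]; field

lemma tendstoSemiUniformly_compProd [TopologicalSpace.SeparableSpace S] [OpensMeasurableSpace S]
    {κ : Kernel S Y} [IsMarkovKernel κ]
    (hκ : ∀ s, TendstoTV κ (𝓝 s) (κ s)) {μs : ι → ProbabilityMeasure S} {μ : ProbabilityMeasure S}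
    (hμ : Tendsto μs l (𝓝 μ)) :
    TendstoSemiUniformly (fun i => (μs i : Measure S) ⊗ₘ κ) l ((μ : Measure S) ⊗ₘ κ) := by
  intro f
  have hbound (h : TVTestFunction Y) (s : S) : |f s * ∫ y, h y ∂κ s| ≤ ‖f‖ := by
    rw [abs_mul]
    simpa using mul_le_mul (f.norm_coe_le_norm s) (h.abs_integral_le_one (κ s)) (abs_nonneg _)
      (norm_nonneg f)
  have hdisint (m : ProbabilityMeasure S) (h : TVTestFunction Y) :
      ∫ p, f p.1 * h p.2 ∂((m : Measure S) ⊗ₘ κ) = ∫ s, f s * ∫ y, h y ∂κ s ∂(m : Measure S) := by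
    rw [Measure.integral_compProd (h.integrable_mul f _)]
    simp only [integral_const_mul]
  simpa only [hdisint] using
    tendstoUniformly_integral_of_equicontinuous hμ (equicontinuous_mul_integral hκ f) hbound

namespace TendstoSemiUniformly

lemma map_fst [OpensMeasurableSpace X] {ρs : ι → Measure (S × Y)} {ρ : Measure (S × Y)}
    (h : TendstoSemiUniformly ρs l ρ) {φ : S → X} (hφ : Continuous φ) (hφm : Measurable φ) :
    TendstoSemiUniformly (fun i => (ρs i).map (Prod.map φ id)) l (ρ.map (Prod.map φ id)) := by
  intro f
  have hmap (m : Measure (S × Y)) (g : TVTestFunction Y) :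
      ∫ p, f p.1 * g p.2 ∂m.map (Prod.map φ id) =
        ∫ p, f.compContinuous ⟨φ, hφ⟩ p.1 * g p.2 ∂m := by
    have hprod : Measurable (Prod.map φ (id : Y → Y)) := hφm.prodMap measurable_id
    rw [integral_map hprod.aemeasurable]
    · rfl
    · exact (g.measurable_mul f).aestronglyMeasurable
  simpa only [hmap] using h (f.compContinuous ⟨φ, hφ⟩)

lemma snd {ρs : ι → Measure (X × Y)} {ρ : Measure (X × Y)} (h : TendstoSemiUniformly ρs l ρ) :
    TendstoTV (fun i => (ρs i).snd) l ρ.snd := by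
  have hmarginal (m : Measure (X × Y)) (g : TVTestFunction Y) :
      ∫ p, BoundedContinuousFunction.const X (1 : ℝ) p.1 * g p.2 ∂m = ∫ y, g y ∂m.snd := by
    rw [Measure.snd, integral_map measurable_snd.aemeasurable g.measurable.aestronglyMeasurable]
    simp
  simpa only [TendstoTV, hmarginal] using h (.const X 1)

end TendstoSemiUniformly

end SemiUniform

section Posterior

variable {X Y : Type*} [MeasurableSpace X] [MeasurableSpace Y] [TopologicalSpace X]
  [OpensMeasurableSpace X]

variable {ι : Type*} {l : Filter ι} {νs : ι → Measure Y} {ν : Measure Y}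
  {ηs : ι → Kernel Y X} {η : Kernel Y X}

lemma measurable_integral_kernel (η : Kernel Y X)
    (f : BoundedContinuousFunction X ℝ) : Measurable fun y => ∫ x, f x ∂η y :=
  (StronglyMeasurable.integral_kernel f.continuous.measurable.stronglyMeasurable).measurable

lemma abs_integral_kernel_le (η : Kernel Y X) [IsMarkovKernel η]
    (f : BoundedContinuousFunction X ℝ) (y : Y) : |∫ x, f x ∂η y| ≤ ‖f‖ := by
  simpa using f.norm_integral_le_norm (η y)

lemma integral_mul_map_swap_compProd (ν : Measure Y) [IsFiniteMeasure ν] (η : Kernel Y X)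
    [IsFiniteKernel η] (f : BoundedContinuousFunction X ℝ) (h : TVTestFunction Y) :
    ∫ p, f p.1 * h p.2 ∂(ν ⊗ₘ η).map Prod.swap = ∫ y, h y * ∫ x, f x ∂η y ∂ν := by
  rw [integral_map measurable_swap.aemeasurable (h.measurable_mul f).aestronglyMeasurable,
    Measure.integral_compProd]
  · simp only [Prod.fst_swap, Prod.snd_swap, mul_comm (f _), integral_const_mul]
  · exact (integrable_map_measure (h.measurable_mul f).aestronglyMeasurable
      measurable_swap.aemeasurable).1 (h.integrable_mul f _)

/-- Test the convergence of the joint laws against the sign of `∫ f ∂ηᵢ - ∫ f ∂η`, which is allowed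
since that convergence is uniform in the second factor. -/
lemma TendstoSemiUniformly.tendsto_integral_abs_sub [∀ i, IsFiniteMeasure (νs i)]
    [IsFiniteMeasure ν] [∀ i, IsMarkovKernel (ηs i)] [IsMarkovKernel η]
    (hρ : TendstoSemiUniformly (fun i => (νs i ⊗ₘ ηs i).map Prod.swap) l
      ((ν ⊗ₘ η).map Prod.swap))
    (f : BoundedContinuousFunction X ℝ) :
    Tendsto (fun i => ∫ y, |∫ x, f x ∂ηs i y - ∫ x, f x ∂η y| ∂ν) l (𝓝 0) := by
  have hν : TendstoTV νs l ν := by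
    simpa only [Measure.snd_map_swap, Measure.fst_compProd] using hρ.snd
  have hmeas (κ : Kernel Y X) : Measurable fun y => ∫ x, f x ∂κ y :=
    measurable_integral_kernel κ f
  let signDiff (i : ι) : TVTestFunction Y :=
    { toFun := fun y => if 0 ≤ ∫ x, f x ∂ηs i y - ∫ x, f x ∂η y then 1 else -1
      measurable := .ite (measurableSet_le measurable_const ((hmeas (ηs i)).sub (hmeas η)))
        measurable_const measurable_const
      abs_le_one := fun y => by split_ifs <;> simp }
  have hbound (κ : Kernel Y X) [IsMarkovKernel κ] (i : ι) (y : Y) :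
      |signDiff i y * ∫ x, f x ∂κ y| ≤ ‖f‖ := by
    rw [abs_mul]
    simpa using mul_le_mul ((signDiff i).abs_le_one y) (abs_integral_kernel_le κ f y)
      (abs_nonneg _) zero_le_one
  have hint (κ : Kernel Y X) [IsMarkovKernel κ] (i : ι) :
      Integrable (fun y => signDiff i y * ∫ x, f x ∂κ y) ν :=
    .of_bound ((signDiff i).measurable.mul (hmeas κ)).aestronglyMeasurable ‖f‖
      (.of_forall (hbound κ i))
  have joint := tendsto_sub_of_tendstoUniformly (hρ f) signDiff
  have marginal := hν.tendsto_integral_sub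
    (fun i => (signDiff i).measurable.mul (hmeas (ηs i))) (fun i => hbound (ηs i) i)
  simp only [integral_mul_map_swap_compProd] at joint
  have habs (i : ι) (y : Y) : |∫ x, f x ∂ηs i y - ∫ x, f x ∂η y| =
      signDiff i y * ∫ x, f x ∂ηs i y - signDiff i y * ∫ x, f x ∂η y := by
    rw [← mul_sub]
    rcases le_or_gt 0 (∫ x, f x ∂ηs i y - ∫ x, f x ∂η y) with hy | hy
    · simp only [signDiff, if_pos hy, one_mul, abs_of_nonneg hy]
    · simp only [signDiff, if_neg hy.not_ge, neg_one_mul, abs_of_neg hy]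
  simp only [habs, integral_sub (hint (ηs _) _) (hint η _)]
  simpa using joint.sub marginal

end Posterior

section ConvergenceDetermining

variable {X : Type*} [TopologicalSpace X] [MeasurableSpace X]

lemma exists_countable_forall_isOpen_exists_lt_measure [SecondCountableTopology X] :
    ∃ 𝒢 : Set (Set X), 𝒢.Countable ∧ (∀ G ∈ 𝒢, IsOpen G) ∧
      ∀ (μ : ProbabilityMeasure X) (U : Set X), IsOpen U → ∀ r < μ U, ∃ G ∈ 𝒢, G ⊆ U ∧ r < μ G := by
  have hbasis := TopologicalSpace.isBasis_countableBasis X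
  refine ⟨Set.sUnion '' {T | T.Finite ∧ T ⊆ TopologicalSpace.countableBasis X},
    (Set.countable_ofPred_finite_subset (TopologicalSpace.countable_countableBasis X)).image _,
    ?_, fun μ U hU r hr => ?_⟩
  · rintro _ ⟨T, ⟨-, hT⟩, rfl⟩
    exact isOpen_sUnion fun G hG => hbasis.isOpen (hT hG)
  · obtain ⟨T, hT, hrT, hTU⟩ := μ.exists_lt_measure_biUnion_of_isOpen
      (fun V hV x hx => by
        obtain ⟨G, hG, hxG, hGV⟩ := hbasis.exists_subset_of_mem_open hx hV
        exact ⟨G, hG, (hbasis.isOpen hG).mem_nhds hxG, hGV⟩) hU hr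
    rw [show ⋃ t ∈ T, t = ⋃₀ (T : Set (Set X)) by simp [Set.sUnion_eq_biUnion]] at hrT hTU
    exact ⟨⋃₀ T, ⟨T, ⟨T.finite_toSet, hT⟩, rfl⟩, hTU, hrT⟩

variable [OpensMeasurableSpace X]

lemma eventually_lt_measure_of_tendsto_integral_apprSeq [HasOuterApproxClosed X] {ι : Type*}
    {l : Filter ι} {μs : ι → ProbabilityMeasure X} {μ : ProbabilityMeasure X} {F : Set X}
    (hF : IsClosed F)
    (h : ∀ n, Tendsto (fun i => ∫ x, (hF.apprSeq n x : ℝ) ∂(μs i : Measure X)) l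
      (𝓝 (∫ x, (hF.apprSeq n x : ℝ) ∂(μ : Measure X)))) {r : ℝ≥0} (hr : r < μ Fᶜ) :
    ∀ᶠ i in l, r < μs i Fᶜ := by
  have hcompl (m : ProbabilityMeasure X) : (m Fᶜ : ℝ) = 1 - (m : Measure X).real F :=
    probReal_compl_eq_one_sub hF.measurableSet
  have hlim : Tendsto (fun n => ∫ x, (hF.apprSeq n x : ℝ) ∂(μ : Measure X)) atTop
      (𝓝 ((μ : Measure X).real F)) := by
    simpa only [← BoundedContinuousFunction.toReal_lintegral_coe_eq_integral] using!
      (ENNReal.tendsto_toReal (by finiteness)).comp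
        (HasOuterApproxClosed.tendsto_lintegral_apprSeq hF (μ : Measure X))
  have hbound (m : ProbabilityMeasure X) (n : ℕ) :
      (m : Measure X).real F ≤ ∫ x, (hF.apprSeq n x : ℝ) ∂(m : Measure X) := by
    rw [← BoundedContinuousFunction.toReal_lintegral_coe_eq_integral]
    exact ENNReal.toReal_mono (BoundedContinuousFunction.lintegral_lt_top_of_nnreal _ _).ne
      (HasOuterApproxClosed.measure_le_lintegral hF _ n)
  have hr' : (μ : Measure X).real F < 1 - r := by
    rw [← NNReal.coe_lt_coe, hcompl] at hr
    linarith
  obtain ⟨n, hn⟩ := (hlim.eventually_lt_const hr').exists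
  filter_upwards [(h n).eventually_lt_const hn] with i hi
  rw [← NNReal.coe_lt_coe, hcompl]
  linarith [hbound (μs i) n]

/-- The functions approximate from above the indicators of the complements of the finite unions of
sets in a countable basis. -/
lemma exists_seq_forall_tendsto_of_tendsto_integral [SecondCountableTopology X]
    [HasOuterApproxClosed X] : ∃ F : ℕ → BoundedContinuousFunction X ℝ,
      ∀ (μs : ℕ → ProbabilityMeasure X) (μ : ProbabilityMeasure X),
        (∀ k, Tendsto (fun n => ∫ x, F k x ∂(μs n : Measure X)) atTop
          (𝓝 (∫ x, F k x ∂(μ : Measure X)))) → Tendsto μs atTop (𝓝 μ) := by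
  obtain ⟨𝒢, h𝒢_count, h𝒢_open, h𝒢⟩ := exists_countable_forall_isOpen_exists_lt_measure (X := X)
  have := h𝒢_count.to_subtype
  let appr (p : 𝒢 × ℕ) : BoundedContinuousFunction X ℝ :=
    ((h𝒢_open p.1 p.1.2).isClosed_compl.apprSeq p.2).comp _ NNReal.isometry_coe.lipschitz
  obtain ⟨F, hF⟩ := ((Set.countable_range appr).insert 0).exists_eq_range (Set.insert_nonempty _ _)
  refine ⟨F, fun μs μ h => tendsto_of_forall_isOpen_le_liminf fun U hU =>
    (le_liminf_iff (isCoboundedUnder_ge_of_le (x := 1) atTop (by simp))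
      (by isBoundedDefault)).2 fun r hr => ?_⟩
  obtain ⟨G, hG, hGU, hrG⟩ := h𝒢 μ U hU r hr
  have hG_lim := eventually_lt_measure_of_tendsto_integral_apprSeq (μs := μs) (l := atTop)
    (h𝒢_open G hG).isClosed_compl (fun n => by
      obtain ⟨k, hk⟩ : appr (⟨G, hG⟩, n) ∈ Set.range F := hF ▸ Set.mem_insert_of_mem _ ⟨_, rfl⟩
      simpa only [hk] using! h k) (by rwa [compl_compl])
  filter_upwards [hG_lim] with n hn
  rw [compl_compl] at hn
  exact hn.trans_le ((μs n).apply_mono hGU)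

end ConvergenceDetermining

section AlmostEverywhereSubsequence

variable {Y : Type*} [MeasurableSpace Y] {ν : Measure Y}

lemma ae_tendsto_zero_of_tsum_lintegral_ne_top {v : ℕ → Y → ℝ≥0∞} (hv : ∀ n, Measurable (v n))
    (h : ∑' n, ∫⁻ y, v n y ∂ν ≠ ∞) : ∀ᵐ y ∂ν, Tendsto (fun n => v n y) atTop (𝓝 0) := by
  rw [← lintegral_tsum fun n => (hv n).aemeasurable] at h
  filter_upwards [ae_lt_top (.tsum hv) h] with y hy
  exact ENNReal.tendsto_atTop_zero_of_tsum_ne_top hy.ne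

lemma exists_strictMono_ae_forall_tendsto_zero {v : ℕ → ℕ → Y → ℝ≥0∞}
    (hv : ∀ k n, Measurable (v k n))
    (h : ∀ k, Tendsto (fun n => ∫⁻ y, v k n y ∂ν) atTop (𝓝 0)) :
    ∃ φ : ℕ → ℕ, StrictMono φ ∧ ∀ᵐ y ∂ν, ∀ k, Tendsto (fun j => v k (φ j) y) atTop (𝓝 0) := by
  obtain ⟨φ, hφ, hbound⟩ : ∃ φ : ℕ → ℕ, StrictMono φ ∧
      ∀ j, ∀ k ∈ Set.Iic j, ∫⁻ y, v k (φ j) y ∂ν < 2⁻¹ ^ j :=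
    extraction_forall_of_eventually fun j => (Set.finite_Iic j).eventually_all.2 fun k _ =>
      (h k).eventually_lt_const (ENNReal.pow_pos (by simp) j)
  refine ⟨φ, hφ, ae_all_iff.2 fun k => ?_⟩
  have hsum : ∑' j, ∫⁻ y, v k (φ (j + k)) y ∂ν ≠ ∞ := by
    refine ne_top_of_le_ne_top (b := ∑' j : ℕ, 2⁻¹ ^ j) (by simp) (ENNReal.tsum_le_tsum fun j => ?_)
    calc ∫⁻ y, v k (φ (j + k)) y ∂ν ≤ 2⁻¹ ^ (j + k) := (hbound (j + k) k (by simp)).le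
      _ ≤ 2⁻¹ ^ j := pow_le_pow_right_of_le_one' (by simp) (by simp)
  filter_upwards [ae_tendsto_zero_of_tsum_lintegral_ne_top (fun j => hv k (φ (j + k))) hsum]
    with y hy
  exact (tendsto_add_atTop_iff_nat k).1 hy

end AlmostEverywhereSubsequence

section MarkovKernelOfProbabilityMeasure

variable {S X : Type*} [MeasurableSpace S] [MeasurableSpace X]

/-- The kernel bundling a measurable family of probability measures, so that the library's
composition-products of kernels apply to it. -/
def markovKernel (κ : S → ProbabilityMeasure X) (hκ : Measurable fun s => (κ s : Measure X)) :
    Kernel S X where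
  toFun s := κ s
  measurable' := hκ

instance (κ : S → ProbabilityMeasure X) (hκ : Measurable fun s => (κ s : Measure X)) :
    IsMarkovKernel (markovKernel κ hκ) :=
  ⟨fun s => inferInstanceAs (IsProbabilityMeasure (κ s : Measure X))⟩

/-- The mixture `∫ κ(dx|s) μ(ds)` of a measurable family of probability measures. -/
noncomputable def mixture (κ : S → ProbabilityMeasure X)
    (hκ : Measurable fun s => (κ s : Measure X)) (μ : ProbabilityMeasure S) :
    ProbabilityMeasure X :=
  ⟨markovKernel κ hκ ∘ₘ (μ : Measure S), inferInstance⟩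

lemma toMeasure_mixture (κ : S → ProbabilityMeasure X)
    (hκ : Measurable fun s => (κ s : Measure X)) (μ : ProbabilityMeasure S) :
    (mixture κ hκ μ : Measure X) = markovKernel κ hκ ∘ₘ (μ : Measure S) :=
  rfl

variable [TopologicalSpace S] [OpensMeasurableSpace S]

lemma measurable_toMeasure_of_tendstoTV {κ : S → ProbabilityMeasure X}
    (hκ : ∀ s, TendstoTV (fun t => (κ t : Measure X)) (𝓝 s) (κ s)) :
    Measurable fun s => (κ s : Measure X) :=
  Measure.measurable_of_measurable_coe _ fun _ hC =>
    (continuous_iff_continuousAt.2 fun s => (hκ s).tendsto_measure hC).measurable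

variable [TopologicalSpace X]

lemma measurable_toMeasure_of_continuous [BorelSpace X] [HasOuterApproxClosed X]
    {κ : S → ProbabilityMeasure X} (hκ : Continuous κ) : Measurable fun s => (κ s : Measure X) :=
  Measurable.measure_of_isPiSystem_of_isProbabilityMeasure (BorelSpace.measurable_eq)
    isPiSystem_isOpen fun _ hU => LowerSemicontinuous.measurable <|
      lowerSemicontinuous_iff_le_liminf.2 fun s =>
        ProbabilityMeasure.le_liminf_measure_open_of_tendsto (hκ.tendsto s) hU

lemma tendsto_mixture [OpensMeasurableSpace X] {κ : S → ProbabilityMeasure X} (hκ : Continuous κ)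
    (hκ_meas : Measurable fun s => (κ s : Measure X)) {ι : Type*} {l : Filter ι}
    {μs : ι → ProbabilityMeasure S} {μ : ProbabilityMeasure S} (hμ : Tendsto μs l (𝓝 μ)) :
    Tendsto (fun i => mixture κ hκ_meas (μs i)) l (𝓝 (mixture κ hκ_meas μ)) := by
  rw [ProbabilityMeasure.tendsto_iff_forall_integral_tendsto] at hμ ⊢
  intro f
  let integralAgainst : BoundedContinuousFunction S ℝ :=
    .ofNormedAddCommGroup (fun s => ∫ x, f x ∂(κ s : Measure X))
      (continuous_iff_continuousAt.2 fun s =>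
        ProbabilityMeasure.tendsto_iff_forall_integral_tendsto.1 (hκ.tendsto s) f)
      ‖f‖ (fun s => f.norm_integral_le_norm _)
  have hmix (m : ProbabilityMeasure S) :
      ∫ x, f x ∂(mixture κ hκ_meas m : Measure X) = ∫ s, integralAgainst s ∂(m : Measure S) := by
    have hf : Measurable f := f.continuous.measurable
    rw [toMeasure_mixture, ← Measure.snd_compProd, Measure.snd,
      integral_map measurable_snd.aemeasurable hf.aestronglyMeasurable,
      Measure.integral_compProd]
    · rfl
    · exact .of_bound (hf.comp measurable_snd).aestronglyMeasurable ‖f‖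
        (.of_forall fun p => f.norm_coe_le_norm p.2)
  simpa only [hmix] using hμ integralAgainst

end MarkovKernelOfProbabilityMeasure

section PosteriorSubsequence

variable {X Y : Type*} [MeasurableSpace X] [MeasurableSpace Y] [TopologicalSpace X]
  [OpensMeasurableSpace X] [SecondCountableTopology X] [HasOuterApproxClosed X]

lemma TendstoSemiUniformly.exists_strictMono_ae_tendsto
    {νs : ℕ → Measure Y} {ν : Measure Y} [∀ n, IsFiniteMeasure (νs n)] [IsFiniteMeasure ν]
    {ηs : ℕ → Y → ProbabilityMeasure X} {η : Y → ProbabilityMeasure X}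
    (hηs : ∀ n, Measurable fun y => (ηs n y : Measure X))
    (hη : Measurable fun y => (η y : Measure X))
    (h : TendstoSemiUniformly (fun n => (νs n ⊗ₘ markovKernel (ηs n) (hηs n)).map Prod.swap) atTop
      ((ν ⊗ₘ markovKernel η hη).map Prod.swap)) :
    ∃ φ : ℕ → ℕ, StrictMono φ ∧ ∀ᵐ y ∂ν, Tendsto (fun j => ηs (φ j) y) atTop (𝓝 (η y)) := by
  obtain ⟨F, hF⟩ := exists_seq_forall_tendsto_of_tendsto_integral (X := X)
  let diff (k n : ℕ) (y : Y) : ℝ :=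
    ∫ x, F k x ∂markovKernel (ηs n) (hηs n) y - ∫ x, F k x ∂markovKernel η hη y
  have hdiff (k n : ℕ) : Measurable (diff k n) :=
    (measurable_integral_kernel _ _).sub (measurable_integral_kernel _ _)
  have hL1 (k : ℕ) : Tendsto (fun n => ∫⁻ y, ‖diff k n y‖ₑ ∂ν) atTop (𝓝 0) := by
    have hint (n : ℕ) : Integrable (diff k n) ν :=
      .of_bound (hdiff k n).aestronglyMeasurable (‖F k‖ + ‖F k‖) (.of_forall fun y =>
        (norm_sub_le _ _).trans
          (add_le_add (abs_integral_kernel_le _ _ y) (abs_integral_kernel_le _ _ y)))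
    simpa only [← ofReal_integral_norm_eq_lintegral_enorm (hint _), ENNReal.ofReal_zero, diff,
      Real.norm_eq_abs]
      using ENNReal.tendsto_ofReal (h.tendsto_integral_abs_sub (F k))
  obtain ⟨φ, hφ, hae⟩ := exists_strictMono_ae_forall_tendsto_zero
    (fun k n => (hdiff k n).enorm) hL1
  refine ⟨φ, hφ, hae.mono fun y hy => hF _ _ fun k => ?_⟩
  exact tendsto_sub_nhds_zero_iff.1 (tendsto_zero_iff_enorm_tendsto_zero.2 (hy k))

end PosteriorSubsequence

section JointLaw

variable {X Y A : Type*} [MeasurableSpace X] [MeasurableSpace Y] [MeasurableSpace A]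
  {P : X × A → ProbabilityMeasure X} {Q : A × X → ProbabilityMeasure Y}

/-- The law `∫ P(dx'|x,a) z(dx)` of the next state under the belief `z` and the action `a`. -/
noncomputable def predictiveLaw (P : X × A → ProbabilityMeasure X)
    (hP : Measurable fun p => (P p : Measure X)) (z : ProbabilityMeasure X) (a : A) :
    ProbabilityMeasure X :=
  mixture P hP (z.prod (diracProba a))

/-- The measure `R(·|z,a)` on `X × Y`, whose values on measurable rectangles are `Rfun P Q z a`. -/
noncomputable def jointLaw (P : X × A → ProbabilityMeasure X) (Q : A × X → ProbabilityMeasure Y)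
    (hP : Measurable fun p => (P p : Measure X)) (hQ : Measurable fun p => (Q p : Measure Y))
    (z : ProbabilityMeasure X) (a : A) : Measure (X × Y) :=
  (predictiveLaw P hP z a : Measure X) ⊗ₘ
    (markovKernel Q hQ).comap (Prod.mk a) measurable_prodMk_left

variable (hP : Measurable fun p => (P p : Measure X)) (hQ : Measurable fun p => (Q p : Measure Y))

instance (z : ProbabilityMeasure X) (a : A) : IsProbabilityMeasure (jointLaw P Q hP hQ z a) :=
  inferInstanceAs (IsProbabilityMeasure (_ ⊗ₘ _))

lemma toMeasure_predictiveLaw (z : ProbabilityMeasure X) (a : A) :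
    (predictiveLaw P hP z a : Measure X) =
      (z : Measure X).bind fun x => (P (x, a) : Measure X) := by
  refine Measure.ext_of_lintegral _ fun f hf => ?_
  have hPa : Measurable fun x => (P (x, a) : Measure X) := hP.comp measurable_prodMk_right
  rw [predictiveLaw, toMeasure_mixture, Measure.lintegral_bind (markovKernel P hP).aemeasurable
    hf.aemeasurable, Measure.lintegral_bind hPa.aemeasurable hf.aemeasurable,
    ProbabilityMeasure.toMeasure_prod, diracProba,
    ProbabilityMeasure.coe_mk, Measure.prod_dirac,
    lintegral_map (hf.lintegral_kernel) measurable_prodMk_right]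
  rfl

lemma snd_jointLaw (z : ProbabilityMeasure X) (a : A) :
    (jointLaw P Q hP hQ z a).snd = RprimeM P Q z a := by
  rw [jointLaw, Measure.snd_compProd, toMeasure_predictiveLaw]
  rfl

lemma isProbabilityMeasure_RprimeM (hP : Measurable fun p => (P p : Measure X))
    (hQ : Measurable fun p => (Q p : Measure Y)) (z : ProbabilityMeasure X) (a : A) :
    IsProbabilityMeasure (RprimeM P Q z a) :=
  snd_jointLaw hP hQ z a ▸ inferInstance

lemma jointLaw_prod (z : ProbabilityMeasure X) (a : A) {B : Set X} {C : Set Y}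
    (hB : MeasurableSet B) (hC : MeasurableSet C) :
    jointLaw P Q hP hQ z a (B ×ˢ C) = Rfun P Q z a B C := by
  have hPa : Measurable fun x => (P (x, a) : Measure X) := hP.comp measurable_prodMk_right
  have hQC : Measurable fun x => (Q (a, x) : Measure Y) C :=
    (Measure.measurable_coe hC).comp (hQ.comp measurable_prodMk_left)
  rw [jointLaw, Measure.compProd_apply_prod hB hC, toMeasure_predictiveLaw,
    ← lintegral_indicator hB]
  refine (Measure.lintegral_bind hPa.aemeasurable (hQC.indicator hB).aemeasurable).trans ?_
  simp only [lintegral_indicator hB]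
  rfl

lemma jointLaw_eq_of_disint {H : ProbabilityMeasure X × A × Y → ProbabilityMeasure X}
    (hH : Disint P Q H) (z : ProbabilityMeasure X) (a : A)
    (hHm : Measurable fun y => (H (z, a, y) : Measure X)) :
    (RprimeM P Q z a ⊗ₘ markovKernel (fun y => H (z, a, y)) hHm).map Prod.swap =
      jointLaw P Q hP hQ z a := by
  have := isProbabilityMeasure_RprimeM hP hQ z a
  refine (Measure.ext_prod fun {B C} hB hC => ?_).symm
  rw [jointLaw_prod hP hQ z a hB hC, hH z a B C hB hC,
    Measure.map_apply measurable_swap (hB.prod hC), Set.preimage_swap_prod,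
    Measure.compProd_apply_prod hC hB]
  rfl

lemma jointLaw_eq_map (z : ProbabilityMeasure X) (a : A) :
    jointLaw P Q hP hQ z a =
      ((((diracProba a).prod (predictiveLaw P hP z a) : ProbabilityMeasure (A × X)) :
        Measure (A × X)) ⊗ₘ markovKernel Q hQ).map (Prod.map Prod.snd id) := by
  refine Measure.ext_of_lintegral _ fun f hf => ?_
  have hf_comp : Measurable fun p : (A × X) × Y => f (p.1.2, p.2) := hf.comp (by fun_prop)
  calc ∫⁻ p, f p ∂jointLaw P Q hP hQ z a
      = ∫⁻ x, ∫⁻ y, f (x, y) ∂(Q (a, x) : Measure Y) ∂(predictiveLaw P hP z a : Measure X) :=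
        Measure.lintegral_compProd hf
    _ = ∫⁻ s, ∫⁻ y, f (s.2, y) ∂markovKernel Q hQ s
          ∂(Measure.dirac a).prod (predictiveLaw P hP z a : Measure X) := by
        rw [Measure.dirac_prod, lintegral_map (Measurable.lintegral_kernel_prod_right' hf_comp)
          measurable_prodMk_left]
        rfl
    _ = _ := by
        rw [lintegral_map hf (by fun_prop)]
        exact (Measure.lintegral_compProd hf_comp).symm

variable [TopologicalSpace X] [SecondCountableTopology X] [TopologicalSpace.PseudoMetrizableSpace X]
  [OpensMeasurableSpace X]
  [TopologicalSpace A] [SecondCountableTopology A] [TopologicalSpace.PseudoMetrizableSpace A]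
  [OpensMeasurableSpace A] {ι : Type*} {l : Filter ι}
  {zs : ι → ProbabilityMeasure X} {z : ProbabilityMeasure X} {as : ι → A} {a : A}

lemma tendsto_predictiveLaw (hP_cont : Continuous P) (hz : Tendsto zs l (𝓝 z))
    (ha : Tendsto as l (𝓝 a)) :
    Tendsto (fun i => predictiveLaw P hP (zs i) (as i)) l (𝓝 (predictiveLaw P hP z a)) :=
  tendsto_mixture hP_cont hP <| (ProbabilityMeasure.continuous_prod.tendsto (z, diracProba a)).comp
    (hz.prodMk_nhds ((continuous_diracProba.tendsto a).comp ha))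

lemma tendstoSemiUniformly_jointLaw (hP_cont : Continuous P)
    (hQ_tv : ∀ p, TendstoTV (fun q => (Q q : Measure Y)) (𝓝 p) (Q p))
    (hz : Tendsto zs l (𝓝 z)) (ha : Tendsto as l (𝓝 a)) :
    TendstoSemiUniformly (fun i => jointLaw P Q hP hQ (zs i) (as i)) l
      (jointLaw P Q hP hQ z a) := by
  have hprod : Tendsto (fun i => (diracProba (as i)).prod (predictiveLaw P hP (zs i) (as i))) l
      (𝓝 ((diracProba a).prod (predictiveLaw P hP z a))) :=
    (ProbabilityMeasure.continuous_prod.tendsto (diracProba a, predictiveLaw P hP z a)).comp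
      (((continuous_diracProba.tendsto a).comp ha).prodMk_nhds
        (tendsto_predictiveLaw hP hP_cont hz ha))
  simpa only [jointLaw_eq_map] using
    (tendstoSemiUniformly_compProd (κ := markovKernel Q hQ) hQ_tv hprod).map_fst
      continuous_snd measurable_snd

end JointLaw

section QKernel

variable {X Y A : Type*} [MeasurableSpace X] [MeasurableSpace Y] [MeasurableSpace A]
  [TopologicalSpace X] [SecondCountableTopology X] [TopologicalSpace.PseudoMetrizableSpace X]
  [TopologicalSpace A] [SecondCountableTopology A] [TopologicalSpace.PseudoMetrizableSpace A]
  [OpensMeasurableSpace A] {P : X × A → ProbabilityMeasure X} {Q : A × X → ProbabilityMeasure Y}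

lemma tendstoTV_RprimeM [OpensMeasurableSpace X] (hP : Measurable fun p => (P p : Measure X))
    (hQ : Measurable fun p => (Q p : Measure Y)) (hP_cont : Continuous P)
    (hQ_tv : ∀ p, TendstoTV (fun q => (Q q : Measure Y)) (𝓝 p) (Q p)) {ι : Type*} {l : Filter ι}
    {zs : ι → ProbabilityMeasure X} {z : ProbabilityMeasure X} {as : ι → A} {a : A}
    (hz : Tendsto zs l (𝓝 z)) (ha : Tendsto as l (𝓝 a)) :
    TendstoTV (fun i => RprimeM P Q (zs i) (as i)) l (RprimeM P Q z a) := by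
  simpa only [snd_jointLaw] using (tendstoSemiUniformly_jointLaw hP hQ hP_cont hQ_tv hz ha).snd

lemma assumptionH_of_disint [OpensMeasurableSpace X] (hP : Measurable fun p => (P p : Measure X))
    (hQ : Measurable fun p => (Q p : Measure Y)) (hP_cont : Continuous P)
    (hQ_tv : ∀ p, TendstoTV (fun q => (Q q : Measure Y)) (𝓝 p) (Q p))
    {H : ProbabilityMeasure X × A × Y → ProbabilityMeasure X}
    (hH_meas : ∀ z a, Measurable fun y => (H (z, a, y) : Measure X)) (hH : Disint P Q H) :
    AssumptionH P Q H := by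
  intro zs z as a hz ha
  have hR := isProbabilityMeasure_RprimeM hP hQ
  have hjoint := tendstoSemiUniformly_jointLaw hP hQ hP_cont hQ_tv hz ha
  simp only [← jointLaw_eq_of_disint hP hQ hH _ _ (hH_meas _ _)] at hjoint
  obtain ⟨φ, hφ, hconv⟩ := hjoint.exists_strictMono_ae_tendsto (fun n => hH_meas _ _) (hH_meas z a)
  obtain ⟨C, hC_ae, hC, hconv⟩ := hconv.exists_measurable_mem
  exact ⟨φ, hφ, C, hC, (mem_ae_iff_prob_eq_one hC).1 hC_ae, hconv⟩

end QKernel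

section WeakContinuity

variable {X Y A : Type*} [MeasurableSpace X] [TopologicalSpace X] [OpensMeasurableSpace X]
  [MeasurableSpace Y] {P : X × A → ProbabilityMeasure X} {Q : A × X → ProbabilityMeasure Y}
  {H : ProbabilityMeasure X × A × Y → ProbabilityMeasure X}

lemma integral_qker {z : ProbabilityMeasure X} {a : A} (hH_meas : Measurable fun y => H (z, a, y))
    (f : BoundedContinuousFunction (ProbabilityMeasure X) ℝ) :
    ∫ ζ, f ζ ∂qker P Q H z a = ∫ y, f (H (z, a, y)) ∂(RprimeM P Q z a) :=
  have : BorelSpace (ProbabilityMeasure X) := ⟨rfl⟩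
  integral_map hH_meas.aemeasurable f.continuous.measurable.aestronglyMeasurable

lemma tendsto_integral_qker [TopologicalSpace A]
    (hH_meas : ∀ z a, Measurable fun y => H (z, a, y)) (hH : AssumptionH P Q H)
    {zs : ℕ → ProbabilityMeasure X} {z : ProbabilityMeasure X} {as : ℕ → A} {a : A}
    [IsProbabilityMeasure (RprimeM P Q z a)]
    (hR : TendstoTV (fun n => RprimeM P Q (zs n) (as n)) atTop (RprimeM P Q z a))
    (hz : Tendsto zs atTop (𝓝 z)) (ha : Tendsto as atTop (𝓝 a))
    (f : BoundedContinuousFunction (ProbabilityMeasure X) ℝ) :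
    Tendsto (fun n => ∫ ζ, f ζ ∂qker P Q H (zs n) (as n)) atTop
      (𝓝 (∫ ζ, f ζ ∂qker P Q H z a)) := by
  have : BorelSpace (ProbabilityMeasure X) := ⟨rfl⟩
  simp only [integral_qker (hH_meas _ _)]
  refine hR.tendsto_integral (fun n => f.continuous.measurable.comp (hH_meas _ _))
    (fun n y => f.norm_coe_le_norm _) fun ψ hψ => ?_
  obtain ⟨φ, -, C, hC, hC_one, hconv⟩ := hH _ z _ a (hz.comp hψ) (ha.comp hψ)
  refine ⟨φ, ?_⟩
  filter_upwards [(mem_ae_iff_prob_eq_one hC).2 hC_one] with y hy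
  exact (f.continuous.tendsto _).comp (hconv y hy)

end WeakContinuity

theorem qker_weakly_continuous_of_totalVariation_general {X Y A : Type*}
    [TopologicalSpace X] [SecondCountableTopology X] [TopologicalSpace.PseudoMetrizableSpace X]
    [MeasurableSpace X] [BorelSpace X] [MeasurableSpace Y]
    [TopologicalSpace A] [SecondCountableTopology A] [TopologicalSpace.PseudoMetrizableSpace A]
    (P : X × A → ProbabilityMeasure X) (Q : A × X → ProbabilityMeasure Y)
    (hPcont : Continuous P)
    (hQtv : ∀ (u : ℕ → A × X) (v : A × X), Tendsto u atTop (𝓝 v) →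
      Tendsto (fun n => ⨆ C : {C : Set Y // MeasurableSet C},
        |((Q (u n)) C.1 : ℝ) - ((Q v) C.1 : ℝ)|) atTop (𝓝 0)) :
    (∀ (zs : ℕ → ProbabilityMeasure X) (z : ProbabilityMeasure X) (as : ℕ → A) (a : A),
      Tendsto zs atTop (𝓝 z) → Tendsto as atTop (𝓝 a) →
      TendstoTV (fun n => RprimeM P Q (zs n) (as n)) atTop (RprimeM P Q z a)) ∧
    (∀ H : ProbabilityMeasure X × A × Y → ProbabilityMeasure X,
      (∀ z a, Measurable fun y => H (z, a, y)) → Disint P Q H → AssumptionH P Q H) ∧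
    (∀ H : ProbabilityMeasure X × A × Y → ProbabilityMeasure X,
      (∀ z a, Measurable fun y => H (z, a, y)) → Disint P Q H →
      ∀ (zs : ℕ → ProbabilityMeasure X) (z : ProbabilityMeasure X) (as : ℕ → A) (a : A),
        Tendsto zs atTop (𝓝 z) → Tendsto as atTop (𝓝 a) →
        ∀ f : BoundedContinuousFunction (ProbabilityMeasure X) ℝ,
          Tendsto (fun n => ∫ ζ, f ζ ∂(qker P Q H (zs n) (as n))) atTop
            (𝓝 (∫ ζ, f ζ ∂(qker P Q H z a)))) := by
  borelize A
  have : BorelSpace (ProbabilityMeasure X) := ⟨rfl⟩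
  have hQ (p : A × X) : TendstoTV (fun q => (Q q : Measure Y)) (𝓝 p) (Q p) :=
    tendstoTV_of_tendsto_iSup (tendsto_of_seq_tendsto fun u hu => hQtv u p hu)
  have hP_meas := measurable_toMeasure_of_continuous hPcont
  have hQ_meas := measurable_toMeasure_of_tendstoTV hQ
  have hR := isProbabilityMeasure_RprimeM hP_meas hQ_meas
  have tendstoTV_R (zs : ℕ → ProbabilityMeasure X) z (as : ℕ → A) a
      (hz : Tendsto zs atTop (𝓝 z)) (ha : Tendsto as atTop (𝓝 a)) :=
    tendstoTV_RprimeM hP_meas hQ_meas hPcont hQ hz ha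
  have assumptionH (H : ProbabilityMeasure X × A × Y → ProbabilityMeasure X)
      (hH_meas : ∀ z a, Measurable fun y => H (z, a, y)) (hH : Disint P Q H) :=
    assumptionH_of_disint hP_meas hQ_meas hPcont hQ
      (fun z a => (measurable_toMeasure_of_continuous continuous_id).comp (hH_meas z a)) hH
  exact ⟨tendstoTV_R, assumptionH, fun H hH_meas hH zs z as a hz ha =>
    tendsto_integral_qker hH_meas (assumptionH H hH_meas hH) (tendstoTV_R zs z as a hz ha) hz ha⟩

/-- **Theorem (weak continuity of `P` plus total variation continuity of `Q`).**
If `P` is weakly continuous and `Q` is continuous in total variation, then: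
(1) the kernel `R'(dy|z,a)` is setwise continuous; (2) every stochastic kernel `H`
satisfying the disintegration identity (3.4) satisfies Assumption (H); and (3) for any
such `H` the transition kernel `q` of the COMDP is weakly continuous. -/
theorem qker_weakly_continuous_of_totalVariation {X Y A : Type*}
    [MetricSpace X] [SecondCountableTopology X] [MeasurableSpace X] [BorelSpace X]
    [MetricSpace Y] [SecondCountableTopology Y] [MeasurableSpace Y] [BorelSpace Y]
    [MetricSpace A] [SecondCountableTopology A] [MeasurableSpace A] [BorelSpace A]
    (P : X × A → ProbabilityMeasure X) (Q : A × X → ProbabilityMeasure Y)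
    (hPmeas : Measurable fun p => (P p : Measure X))
    (hQmeas : Measurable fun p => (Q p : Measure Y))
    (hPcont : Continuous P)
    (hQtv : ∀ (u : ℕ → A × X) (v : A × X), Tendsto u atTop (𝓝 v) →
      Tendsto (fun n => ⨆ C : {C : Set Y // MeasurableSet C},
        |((Q (u n)) C.1 : ℝ) - ((Q v) C.1 : ℝ)|) atTop (𝓝 0)) :
    (∀ (zs : ℕ → ProbabilityMeasure X) (z : ProbabilityMeasure X) (as : ℕ → A) (a : A),
      Tendsto zs atTop (𝓝 z) → Tendsto as atTop (𝓝 a) →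
      ∀ C : Set Y, MeasurableSet C →
        Tendsto (fun n => RprimeM P Q (zs n) (as n) C) atTop (𝓝 (RprimeM P Q z a C))) ∧
    (∀ H : ProbabilityMeasure X × A × Y → ProbabilityMeasure X,
      Measurable H → Disint P Q H → AssumptionH P Q H) ∧
    (∀ H : ProbabilityMeasure X × A × Y → ProbabilityMeasure X,
      Measurable H → Disint P Q H →
      ∀ (zs : ℕ → ProbabilityMeasure X) (z : ProbabilityMeasure X) (as : ℕ → A) (a : A),
        Tendsto zs atTop (𝓝 z) → Tendsto as atTop (𝓝 a) →
        ∀ f : BoundedContinuousFunction (ProbabilityMeasure X) ℝ,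
          Tendsto (fun n => ∫ ζ, f ζ ∂(qker P Q H (zs n) (as n))) atTop
            (𝓝 (∫ ζ, f ζ ∂(qker P Q H z a)))) := by
  have := isProbabilityMeasure_RprimeM hPmeas hQmeas
  have h := qker_weakly_continuous_of_totalVariation_general P Q hPcont hQtv
  exact ⟨fun zs z as a hz ha C hC => (h.1 zs z as a hz ha).tendsto_measure hC,
    fun H hH => h.2.1 H fun z a => hH.comp (by fun_prop),
    fun H hH => h.2.2 H fun z a => hH.comp (by fun_prop)⟩
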